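/- Let x and x̄ be two piecewise constant functional order parameters. Then for every q ∈ [0,1], y ∈ ℝ and β ≥ 0, the Parisi functions satisfy |f(q,y;x,β) − f(q,y;x̄,β)| ≤ (β²/2) ∫_q^1 |x(q′) − x̄(q′)| dq′. In particular f is pointwise continuous in x with respect to the L¹([0,1],dq) norm. -/

import Mathlib

open MeasureTheory ProbabilityTheory Filter

noncomputable section

/-! ## Gaussian disorder -/

/-- The standard (centered, unit variance) Gaussian measure on `ℝ`. -/
def stdGauss : Measure ℝ := gaussianReal 0 1

instance : IsProbabilityMeasure stdGauss := by unfold stdGauss; infer_instance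

/-- `N` i.i.d. standard Gaussian variables. -/
def gaussN (N : ℕ) : Measure (Fin N → ℝ) := Measure.pi fun _ => stdGauss

instance (N : ℕ) : IsProbabilityMeasure (gaussN N) := by unfold gaussN; infer_instance

/-- The i.i.d. standard Gaussian couplings `J_{ij}` (only entries with `i < j` are used). -/
def gaussC (N : ℕ) : Measure (Fin N → Fin N → ℝ) := Measure.pi fun _ => gaussN N

instance (N : ℕ) : IsProbabilityMeasure (gaussC N) := by unfold gaussC; infer_instance

/-- The i.i.d. standard Gaussian one-body fields `J_i^a`, `a = 1, …, K`
(row `⟨a-1⟩ : Fin K` corresponds to the level `a` of the paper). -/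
def gaussS (K N : ℕ) : Measure (Fin K → Fin N → ℝ) := Measure.pi fun _ => gaussN N

instance (K N : ℕ) : IsProbabilityMeasure (gaussS K N) := by unfold gaussS; infer_instance

/-- I.i.d. standard Gaussian couplings indexed by subsets of sites, for the p-spin model
(only the cardinality-`p` subsets are used). -/
def gaussP (N : ℕ) : Measure (Finset (Fin N) → ℝ) := Measure.pi fun _ => stdGauss

instance (N : ℕ) : IsProbabilityMeasure (gaussP N) := by unfold gaussP; infer_instance

/-! ## Spins and overlaps -/

/-- The spin value (`±1`) of a Boolean configuration entry. -/
def spin (b : Bool) : ℝ := if b then 1 else -1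

/-- The overlap `q₁₂ = N⁻¹ ∑ᵢ σᵢ⁽¹⁾ σᵢ⁽²⁾` of two replicas. -/
def overlap (N : ℕ) (σ τ : Fin N → Bool) : ℝ := (N : ℝ)⁻¹ * ∑ i, spin (σ i) * spin (τ i)

/-! ## Piecewise constant functional order parameters and the Parisi function -/

/-- One backward step of the Parisi recursion on an interval of constancy of the
functional order parameter: from `g = f(q_a, ·)`, with value `m` of the order parameter
and `s = q_a - q`, produce `f(q, ·)`. -/
def pStep (m s : ℝ) (g : ℝ → ℝ) (y : ℝ) : ℝ :=
  if m = 0 then ∫ z, g (y + z * Real.sqrt s) ∂stdGauss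
  else m⁻¹ * Real.log (∫ z, Real.exp (m * g (y + z * Real.sqrt s)) ∂stdGauss)

/-- `parisiLevel K q m β j` is the Parisi function `f(q_{K-j}, ·; x, β)` at the node
`q_{K-j}`, obtained by `j` backward steps from the final condition `f(q_K, y) = log cosh (β y)`. -/
def parisiLevel (K : ℕ) (q m : ℕ → ℝ) (β : ℝ) : ℕ → ℝ → ℝ
  | 0 => fun y => Real.log (Real.cosh (β * y))
  | j + 1 => pStep (m (K - j)) (q (K - j) - q (K - j - 1)) (parisiLevel K q m β j)

/-- The Parisi function `f(r, y; x, β)` for a piecewise constant order parameter `x`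
given by nodes `q` and values `m`:  for `q_{a-1} ≤ r ≤ q_a` it is obtained from
`f(q_a, ·)` by one backward step with value `m_a` over a time `q_a - r`. -/
def parisiF (K : ℕ) (q m : ℕ → ℝ) (β : ℝ) (r y : ℝ) : ℝ :=
  pStep (m (sInf {a : ℕ | r ≤ q a})) (q (sInf {a : ℕ | r ≤ q a}) - r)
    (parisiLevel K q m β (K - sInf {a : ℕ | r ≤ q a})) y

/-- The functional order parameter as a function: `x(r) = m_a` for `q_{a-1} ≤ r < q_a`,
and `x(1) = m_K`. -/
def xFun (K : ℕ) (q m : ℕ → ℝ) (r : ℝ) : ℝ :=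
  if 1 ≤ r then m K else m (sInf {a : ℕ | r < q a})

/-- A piecewise constant functional order parameter:
`0 = q_0 ≤ q_1 ≤ … ≤ q_K = 1`, `0 ≤ m_1 ≤ … ≤ m_K ≤ 1`,
with the conventions `m_0 = 0`, `m_{K+1} = 1`. -/
structure OrderParam where
  K : ℕ
  hK : 1 ≤ K
  q : ℕ → ℝ
  m : ℕ → ℝ
  hq0 : q 0 = 0
  hqK : q K = 1
  hq_mono : ∀ a, a < K → q a ≤ q (a + 1)
  hm0 : m 0 = 0
  hmtop : m (K + 1) = 1
  hm1 : 0 ≤ m 1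
  hm_mono : ∀ a, 1 ≤ a → a < K → m a ≤ m (a + 1)
  hmK : m K ≤ 1

/-- Guerra's trial function `ᾱ(β, h; x) = log 2 + f(0, h; x, β) - (β²/2) ∫₀¹ r x(r) dr`. -/
def trialAlpha (K : ℕ) (q m : ℕ → ℝ) (β h : ℝ) : ℝ :=
  Real.log 2 + parisiLevel K q m β K h - β ^ 2 / 2 * ∫ r in (0 : ℝ)..1, r * xFun K q m r

/-! ## The Sherrington–Kirkpatrick model -/

/-- The SK Hamiltonian `H_N(σ, h, J) = -(1/√N) ∑_{i<j} J_{ij} σ_i σ_j - h ∑_i σ_i`. -/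
def hamSK (N : ℕ) (h : ℝ) (Jc : Fin N → Fin N → ℝ) (σ : Fin N → Bool) : ℝ :=
  -(1 / Real.sqrt N) * ∑ i, ∑ j, (if i < j then Jc i j * spin (σ i) * spin (σ j) else 0)
    - h * ∑ i, spin (σ i)

/-- The SK partition function `Z_N(β, h, J)`. -/
def ZSK (N : ℕ) (β h : ℝ) (Jc : Fin N → Fin N → ℝ) : ℝ :=
  ∑ σ : Fin N → Bool, Real.exp (-(β * hamSK N h Jc σ))

/-- The quenched average `N⁻¹ E log Z_N(β, h, J)`. -/
def quenchedFE (N : ℕ) (β h : ℝ) : ℝ :=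
  (N : ℝ)⁻¹ * ∫ Jc, Real.log (ZSK N β h Jc) ∂gaussC N

/-- The ground state energy density `e_N(J, h)`, defined by
`-e_N(J, h) = N⁻¹ min_σ H_N(σ, h, J)`. -/
def eGS (N : ℕ) (h : ℝ) (Jc : Fin N → Fin N → ℝ) : ℝ :=
  -((N : ℝ)⁻¹ * ⨅ σ : Fin N → Bool, hamSK N h Jc σ)

/-- The quenched ground state energy density `e_N(h) = E(e_N(J, h))`. -/
def eQuenched (N : ℕ) (h : ℝ) : ℝ := ∫ Jc, eGS N h Jc ∂gaussC N

/-! ## The interpolating system -/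

/-- The interpolating Boltzmann factor. -/
def bFac (N K : ℕ) (β h t : ℝ) (q : ℕ → ℝ) (Jc : Fin N → Fin N → ℝ)
    (Js : Fin K → Fin N → ℝ) (σ : Fin N → Bool) : ℝ :=
  Real.exp (β * Real.sqrt (t / N) *
        ∑ i, ∑ j, (if i < j then Jc i j * spin (σ i) * spin (σ j) else 0)
      + β * h * ∑ i, spin (σ i)
      + β * Real.sqrt (1 - t) *
          ∑ a : Fin K, Real.sqrt (q (a.val + 1) - q a.val) * ∑ i, Js a i * spin (σ i))

/-- The interpolating partition function `Z̃_N(β, h; t; x; J)`. -/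
def Ztil (N K : ℕ) (β h t : ℝ) (q : ℕ → ℝ) (Jc : Fin N → Fin N → ℝ)
    (Js : Fin K → Fin N → ℝ) : ℝ :=
  ∑ σ : Fin N → Bool, bFac N K β h t q Jc Js σ

/-- `Wrec … j` is the random variable `Z_{K-j}`:  `Z_K = Z̃_N` and
`Z_{a-1} = (E_a (Z_a^{m_a}))^{1/m_a}`, where `E_a` integrates the Gaussian row `J^a`. -/
def Wrec (N K : ℕ) (β h t : ℝ) (q m : ℕ → ℝ) :
    ℕ → (Fin N → Fin N → ℝ) → (Fin K → Fin N → ℝ) → ℝ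
  | 0 => Ztil N K β h t q
  | j + 1 => fun Jc Js =>
      if hj : j < K then
        (∫ g : Fin N → ℝ,
            (Wrec N K β h t q m j Jc (Function.update Js ⟨K - 1 - j, by omega⟩ g)) ^ m (K - j)
          ∂gaussN N) ^ (m (K - j))⁻¹
      else Wrec N K β h t q m j Jc Js

/-- `Zrec … a` is the random variable `Z_a` of the broken replica interpolation. -/
def Zrec (N K : ℕ) (β h t : ℝ) (q m : ℕ → ℝ) (a : ℕ) :
    (Fin N → Fin N → ℝ) → (Fin K → Fin N → ℝ) → ℝ :=
  Wrec N K β h t q m (K - a)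

/-- The interpolating auxiliary function `α̃_N(t) = N⁻¹ E₀ log Z₀`. -/
def atilde (N K : ℕ) (β h : ℝ) (q m : ℕ → ℝ) (t : ℝ) : ℝ :=
  (N : ℝ)⁻¹ * ∫ Jc, Real.log (Wrec N K β h t q m K Jc 0) ∂gaussC N

/-- The normalized weight `f_a = Z_a^{m_a} / E_a(Z_a^{m_a}) = Z_a^{m_a} / Z_{a-1}^{m_a}`. -/
def fWeight (N K : ℕ) (β h t : ℝ) (q m : ℕ → ℝ) (a : ℕ) (Jc : Fin N → Fin N → ℝ)
    (Js : Fin K → Fin N → ℝ) : ℝ :=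
  Zrec N K β h t q m a Jc Js ^ m a / Zrec N K β h t q m (a - 1) Jc Js ^ m a

/-- The Gibbs expectation `ω(A)` of the interpolating Boltzmann factor. -/
def gibbs (N K : ℕ) (β h t : ℝ) (q : ℕ → ℝ) (A : (Fin N → Bool) → ℝ)
    (Jc : Fin N → Fin N → ℝ) (Js : Fin K → Fin N → ℝ) : ℝ :=
  (∑ σ : Fin N → Bool, A σ * bFac N K β h t q Jc Js σ) / Ztil N K β h t q Jc Js

/-- The two-replica Gibbs product expectation `Ω(A)`. -/
def gibbs2 (N K : ℕ) (β h t : ℝ) (q : ℕ → ℝ) (A : (Fin N → Bool) → (Fin N → Bool) → ℝ)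
    (Jc : Fin N → Fin N → ℝ) (Js : Fin K → Fin N → ℝ) : ℝ :=
  (∑ σ : Fin N → Bool, ∑ τ : Fin N → Bool,
      A σ τ * bFac N K β h t q Jc Js σ * bFac N K β h t q Jc Js τ) /
    Ztil N K β h t q Jc Js ^ 2

/-- `omT1 … A j` is the partially averaged state `ω̃_{K-j}(A)`:
`ω̃_K = ω` and `ω̃_{a-1}(·) = E_a (f_a ω̃_a(·))`. -/
def omT1 (N K : ℕ) (β h t : ℝ) (q m : ℕ → ℝ) (A : (Fin N → Bool) → ℝ) :
    ℕ → (Fin N → Fin N → ℝ) → (Fin K → Fin N → ℝ) → ℝ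
  | 0 => gibbs N K β h t q A
  | j + 1 => fun Jc Js =>
      if hj : j < K then
        ∫ g : Fin N → ℝ,
          fWeight N K β h t q m (K - j) Jc (Function.update Js ⟨K - 1 - j, by omega⟩ g) *
            omT1 N K β h t q m A j Jc (Function.update Js ⟨K - 1 - j, by omega⟩ g)
          ∂gaussN N
      else omT1 N K β h t q m A j Jc Js

/-- `omT2 … A j` is the partially averaged two-replica state `Ω̃_{K-j}(A)`:
`Ω̃_K = Ω` and `Ω̃_{a-1}(·) = E_a (f_a Ω̃_a(·))`. -/
def omT2 (N K : ℕ) (β h t : ℝ) (q m : ℕ → ℝ) (A : (Fin N → Bool) → (Fin N → Bool) → ℝ) :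
    ℕ → (Fin N → Fin N → ℝ) → (Fin K → Fin N → ℝ) → ℝ
  | 0 => gibbs2 N K β h t q A
  | j + 1 => fun Jc Js =>
      if hj : j < K then
        ∫ g : Fin N → ℝ,
          fWeight N K β h t q m (K - j) Jc (Function.update Js ⟨K - 1 - j, by omega⟩ g) *
            omT2 N K β h t q m A j Jc (Function.update Js ⟨K - 1 - j, by omega⟩ g)
          ∂gaussN N
      else omT2 N K β h t q m A j Jc Js

/-- The deformed quenched average `⟨A⟩_a = E(f_1 ⋯ f_a Ω̃_a(A))` at interpolation
parameter `t`, for a function `A` of two replicas. -/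
def angA (N K : ℕ) (β h t : ℝ) (q m : ℕ → ℝ) (a : ℕ)
    (A : (Fin N → Bool) → (Fin N → Bool) → ℝ) : ℝ :=
  ∫ Jc, ∫ Js,
      (∏ b ∈ Finset.Icc 1 a, fWeight N K β h t q m b Jc Js) *
        omT2 N K β h t q m A (K - a) Jc Js
    ∂gaussS K N ∂gaussC N

/-! ## Zero temperature (ground state) objects -/

/-- The zero-temperature Parisi recursion: `parisiLevelBar K q m j` is `f̄(q_{K-j}, ·; x̄)`,
with final condition `f̄(q_K, y) = |y|`. -/
def parisiLevelBar (K : ℕ) (q m : ℕ → ℝ) : ℕ → ℝ → ℝ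
  | 0 => fun y => |y|
  | j + 1 => pStep (m (K - j)) (q (K - j) - q (K - j - 1)) (parisiLevelBar K q m j)

/-- A zero-temperature piecewise constant order parameter: nodes
`0 = q_0 ≤ … ≤ q_K = 1` and nondecreasing values `0 ≤ m̄_1 ≤ … ≤ m̄_K`
(no upper bound `1`), with the convention `m̄_0 = 0`. -/
structure ZeroTParam where
  K : ℕ
  hK : 1 ≤ K
  q : ℕ → ℝ
  m : ℕ → ℝ
  hq0 : q 0 = 0
  hqK : q K = 1
  hq_mono : ∀ a, a < K → q a ≤ q (a + 1)
  hm0 : m 0 = 0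
  hm1 : 0 ≤ m 1
  hm_mono : ∀ a, 1 ≤ a → a < K → m a ≤ m (a + 1)

/-- The zero-temperature trial function `α̃(h; x̄) = f̄(0, h; x̄) - (1/2) ∫₀¹ r x̄(r) dr`. -/
def gsTrial (K : ℕ) (q m : ℕ → ℝ) (h : ℝ) : ℝ :=
  parisiLevelBar K q m K h - 1 / 2 * ∫ r in (0 : ℝ)..1, r * xFun K q m r

/-! ## The p-spin model -/

/-- A piecewise constant functional order parameter on `[0, p/2]`:
`0 = q_0 ≤ … ≤ q_K = p/2` and `0 ≤ m_1 ≤ … ≤ m_K ≤ 1`. -/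
structure POrderParam (p : ℕ) where
  K : ℕ
  hK : 1 ≤ K
  q : ℕ → ℝ
  m : ℕ → ℝ
  hq0 : q 0 = 0
  hqK : q K = p / 2
  hq_mono : ∀ a, a < K → q a ≤ q (a + 1)
  hm1 : 0 ≤ m 1
  hm_mono : ∀ a, 1 ≤ a → a < K → m a ≤ m (a + 1)
  hmK : m K ≤ 1

/-- The p-spin Hamiltonian
`H_N(σ,h,J) = -(p!/(2N^{p-1}))^{1/2} ∑_{i_1<…<i_p} J_{i_1…i_p} σ_{i_1}⋯σ_{i_p} - h ∑_i σ_i`. -/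
def hamP (p N : ℕ) (h : ℝ) (J : Finset (Fin N) → ℝ) (σ : Fin N → Bool) : ℝ :=
  -Real.sqrt ((Nat.factorial p : ℝ) / (2 * (N : ℝ) ^ (p - 1))) *
      ∑ S ∈ Finset.powersetCard p (Finset.univ : Finset (Fin N)), J S * ∏ i ∈ S, spin (σ i)
    - h * ∑ i, spin (σ i)

/-- The p-spin partition function. -/
def ZP (p N : ℕ) (β h : ℝ) (J : Finset (Fin N) → ℝ) : ℝ :=
  ∑ σ : Fin N → Bool, Real.exp (-(β * hamP p N h J σ))

/-- The p-spin quenched average `N⁻¹ E log Z_N^{(p)}(β, h, J)`. -/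
def quenchedFEP (p N : ℕ) (β h : ℝ) : ℝ :=
  (N : ℝ)⁻¹ * ∫ J, Real.log (ZP p N β h J) ∂gaussP N

/-- The functional order parameter on `[0, p/2]` as a function. -/
def xFunP (p K : ℕ) (q m : ℕ → ℝ) (r : ℝ) : ℝ :=
  if (p : ℝ) / 2 ≤ r then m K else m (sInf {a : ℕ | r < q a})

/-- The change of variables `q̄(r)` defined by `2r = p q̄^{p-1}`. -/
def qBar (p : ℕ) (r : ℝ) : ℝ := (2 * r / p) ^ (((p : ℝ) - 1)⁻¹)

/-- The p-spin trial function
`ᾱ_p(β, h; x) = log 2 + f(0, h; x, β) - (β²/2) ∫₀^{p/2} q̄(r) x(r) dr`. -/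
def trialAlphaP (p K : ℕ) (q m : ℕ → ℝ) (β h : ℝ) : ℝ :=
  Real.log 2 + parisiLevel K q m β K h
    - β ^ 2 / 2 * ∫ r in (0 : ℝ)..((p : ℝ) / 2), qBar p r * xFunP p K q m r

/-!
The map `m ↦ m⁻¹ log 𝔼[exp (m φ)]` is the divided difference at `0` of the cumulant generating
function of `φ`, so its Lipschitz constant is half a bound for the variance of `φ` under the tilts
`exp (t φ)`. One Parisi step of short length `h` from an `L`-Lipschitz function has
`φ = g (y + z √h) - g y` with `|φ| ≤ L √h |z|`, hence tilted variance at most `L² h (1 + o(1))`.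
A step of length `s` is the `n`-fold composition of steps of length `s / n` and every step is a
contraction for the sup norm; summing the `n` errors and letting `n → ∞` bounds the effect of
replacing `m` by `m'` by `L² / 2 * s * |m - m'|`. For the Parisi function `L = |β|`, and these
bounds add up, again by contraction, over the intervals on which both order parameters are constant.
-/

open scoped Topology NNReal

/-! ## Divided differences -/

lemma dslope_eq_integral_deriv {E : Type*} [NormedAddCommGroup E] [NormedSpace ℝ E]
    [CompleteSpace E] {f : ℝ → E} {s : Set ℝ} {c a : ℝ} (hs : Convex ℝ s) (hc : c ∈ s) (ha : a ∈ s)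
    (hf : ∀ x ∈ s, DifferentiableAt ℝ f x) (hf' : ContinuousOn (deriv f) s) :
    dslope f c a = ∫ τ in (0 : ℝ)..1, deriv f (c + τ * (a - c)) := by
  rcases eq_or_ne a c with rfl | hac
  · simp
  have hmem : ∀ τ ∈ Set.Icc (0 : ℝ) 1, c + τ * (a - c) ∈ s := fun τ hτ =>
    hs.add_smul_sub_mem hc ha hτ
  have h := intervalIntegral.integral_unitInterval_deriv_eq_sub (f := f) (z₀ := c) (z₁ := a - c)
    (hf'.comp (by fun_prop) hmem) fun τ hτ => (hf _ (hmem τ hτ)).hasDerivAt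
  rw [add_sub_cancel] at h
  rw [dslope_of_ne f hac, slope_def_module, ← h, inv_smul_smul₀ (sub_ne_zero.2 hac)]
  rfl

/-- The factor `1 / 2` comes from averaging `f'` over the segment from `c`: moving its end point
by `δ` moves the point at parameter `τ ∈ [0, 1]` by `τ δ`. -/
lemma lipschitzOnWith_dslope {E : Type*} [NormedAddCommGroup E] [NormedSpace ℝ E]
    [CompleteSpace E] {f : ℝ → E} {s : Set ℝ} {c : ℝ} {V : ℝ≥0} (hs : Convex ℝ s) (hc : c ∈ s)
    (hf : ∀ x ∈ s, DifferentiableAt ℝ f x) (hf' : LipschitzOnWith V (deriv f) s) :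
    LipschitzOnWith (V / 2) (dslope f c) s := by
  refine LipschitzOnWith.of_dist_le_mul fun a ha b hb => ?_
  have hmem : ∀ x ∈ s, ∀ τ ∈ Set.Icc (0 : ℝ) 1, c + τ * (x - c) ∈ s := fun x hx τ hτ =>
    hs.add_smul_sub_mem hc hx hτ
  have hint : ∀ x ∈ s,
      IntervalIntegrable (fun τ => deriv f (c + τ * (x - c))) volume 0 1 := fun x hx => by
    refine ContinuousOn.intervalIntegrable ?_
    rw [Set.uIcc_of_le zero_le_one]
    exact hf'.continuousOn.comp (by fun_prop) (hmem x hx)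
  have hle : ∀ τ ∈ Set.Icc (0 : ℝ) 1,
      ‖deriv f (c + τ * (a - c)) - deriv f (c + τ * (b - c))‖ ≤ V * |a - b| * τ := fun τ hτ => by
    calc _ ≤ V * dist (c + τ * (a - c)) (c + τ * (b - c)) := by
          rw [← dist_eq_norm]
          exact hf'.dist_le_mul _ (hmem a ha τ hτ) _ (hmem b hb τ hτ)
      _ = V * |a - b| * τ := by
          rw [Real.dist_eq, show c + τ * (a - c) - (c + τ * (b - c)) = τ * (a - b) by ring,
            abs_mul, abs_of_nonneg hτ.1]
          ring
  calc dist (dslope f c a) (dslope f c b)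
      = ‖∫ τ in (0 : ℝ)..1, (deriv f (c + τ * (a - c)) - deriv f (c + τ * (b - c)))‖ := by
        rw [dist_eq_norm, dslope_eq_integral_deriv hs hc ha hf hf'.continuousOn,
          dslope_eq_integral_deriv hs hc hb hf hf'.continuousOn,
          intervalIntegral.integral_sub (hint a ha) (hint b hb)]
    _ ≤ ∫ τ in (0 : ℝ)..1, V * |a - b| * τ :=
        intervalIntegral.norm_integral_le_of_norm_le zero_le_one
          (ae_of_all _ fun τ hτ => hle τ (Set.Ioc_subset_Icc_self hτ))
          (Continuous.intervalIntegrable (by fun_prop) _ _)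
    _ = ↑(V / 2) * dist a b := by
        rw [intervalIntegral.integral_const_mul, integral_id, Real.dist_eq, NNReal.coe_div,
          NNReal.coe_ofNat]
        ring

/-! ## Exponential moments and exponential means -/

section ExpMoments

variable {Ω : Type*} [MeasurableSpace Ω] {X Y W : Ω → ℝ} {μ : Measure Ω}

/-- The random variable `X` has exponential moments of every order, positive or negative: its
moment generating function is finite on all of `ℝ`. -/
def HasExpMoments (X : Ω → ℝ) (μ : Measure Ω) : Prop :=
  ∀ t : ℝ, Integrable (fun ω => Real.exp (t * X ω)) μ

namespace HasExpMoments

lemma mem_interior (hX : HasExpMoments X μ) (t : ℝ) : t ∈ interior (integrableExpSet X μ) := by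
  rw [show integrableExpSet X μ = Set.univ from Set.eq_univ_of_forall hX, interior_univ]
  trivial

lemma integrable (hX : HasExpMoments X μ) : Integrable X μ := by
  simpa using integrable_pow_of_mem_interior_integrableExpSet (hX.mem_interior 0) 1

lemma add_const (hX : HasExpMoments X μ) (c : ℝ) : HasExpMoments (fun ω => X ω + c) μ := fun t => by
  simpa only [mul_add, Real.exp_add] using (hX t).mul_const (Real.exp (t * c))

lemma of_abs_le_mul (hW : HasExpMoments W μ) (hX : AEMeasurable X μ) {K : ℝ}
    (hXW : ∀ᵐ ω ∂μ, |X ω| ≤ K * W ω) : HasExpMoments X μ := fun t => by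
  refine (hW (|t| * K)).mono' (hX.const_mul t).exp.aestronglyMeasurable ?_
  filter_upwards [hXW] with ω hω
  rw [Real.norm_eq_abs, Real.abs_exp, Real.exp_le_exp, mul_assoc]
  calc t * X ω ≤ |t| * |X ω| := (le_abs_self _).trans_eq (abs_mul _ _)
    _ ≤ |t| * (K * W ω) := by gcongr

lemma abs (hX : HasExpMoments X μ) : HasExpMoments (fun ω => |X ω|) μ := fun t =>
  integrable_exp_mul_abs (hX t) (hX (-t))

end HasExpMoments

/-- The exponential mean `m⁻¹ log 𝔼[exp (m X)]` of a random variable `X`, extended to `m = 0` by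
its limit `𝔼[X]`. A backward step of the Parisi recursion is an exponential mean with respect to
the Gaussian measure. -/
def expMean (m : ℝ) (X : Ω → ℝ) (μ : Measure Ω) : ℝ :=
  if m = 0 then μ[X] else m⁻¹ * cgf X μ m

variable [IsProbabilityMeasure μ]

lemma expMean_eq_dslope_cgf (hX : HasExpMoments X μ) (m : ℝ) :
    expMean m X μ = dslope (cgf X μ) 0 m := by
  unfold expMean
  split_ifs with hm
  · rw [hm, dslope_same, deriv_cgf_zero (hX.mem_interior 0)]
    simp
  · rw [dslope_of_ne _ hm, slope_def_field, cgf_zero, sub_zero, sub_zero, inv_mul_eq_div]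

lemma expMean_mono (hX : HasExpMoments X μ) (hY : HasExpMoments Y μ) (hXY : X ≤ᵐ[μ] Y) (m : ℝ) :
    expMean m X μ ≤ expMean m Y μ := by
  unfold expMean
  rcases lt_trichotomy m 0 with hm | rfl | hm
  · rw [if_neg hm.ne, if_neg hm.ne]
    exact mul_le_mul_of_nonpos_left (Real.log_le_log (mgf_pos (hY m))
      (mgf_anti_of_nonpos hXY hm.le (hX m))) (inv_nonpos.2 hm.le)
  · simpa using integral_mono_ae hX.integrable hY.integrable hXY
  · rw [if_neg hm.ne', if_neg hm.ne']
    exact mul_le_mul_of_nonneg_left (Real.log_le_log (mgf_pos (hX m))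
      (mgf_mono_of_nonneg hXY hm.le (hY m))) (inv_nonneg.2 hm.le)

lemma expMean_add_const (hX : HasExpMoments X μ) (m c : ℝ) :
    expMean m (fun ω => X ω + c) μ = expMean m X μ + c := by
  unfold expMean
  split_ifs with hm
  · rw [integral_add hX.integrable (integrable_const c), integral_const, probReal_univ, one_smul]
  · rw [cgf, mgf_add_const, Real.log_mul (mgf_pos (hX m)).ne' (Real.exp_ne_zero _), Real.log_exp,
      mul_add, inv_mul_cancel_left₀ hm, cgf]

lemma expMean_le_add (hX : HasExpMoments X μ) (hY : HasExpMoments Y μ) {D : ℝ}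
    (hXY : ∀ᵐ ω ∂μ, X ω ≤ Y ω + D) (m : ℝ) : expMean m X μ ≤ expMean m Y μ + D :=
  (expMean_mono hX (hY.add_const D) hXY m).trans_eq (expMean_add_const hY m D)

lemma abs_expMean_sub_expMean_le (hX : HasExpMoments X μ) {T V : ℝ}
    (hV : ∀ t ∈ Set.Icc (-T) T, |iteratedDeriv 2 (cgf X μ) t| ≤ V) {m m' : ℝ} (hm : |m| ≤ T)
    (hm' : |m'| ≤ T) : |expMean m X μ - expMean m' X μ| ≤ V / 2 * |m - m'| := by
  have h0 : (0 : ℝ) ∈ Set.Icc (-T) T := abs_le.1 (abs_zero.trans_le ((abs_nonneg m).trans hm))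
  lift V to ℝ≥0 using (abs_nonneg _).trans (hV 0 h0)
  have hcgf : ContDiff ℝ 2 (cgf X μ) :=
    contDiff_iff_contDiffAt.2 fun t => (analyticAt_cgf (hX.mem_interior t)).contDiffAt
  have hlip : LipschitzOnWith V (deriv (cgf X μ)) (Set.Icc (-T) T) := by
    refine (convex_Icc _ _).lipschitzOnWith_of_nnnorm_deriv_le
      (fun t _ => hcgf.differentiable_deriv_two t) fun t ht => ?_
    rw [← NNReal.coe_le_coe, coe_nnnorm, Real.norm_eq_abs]
    simpa [iteratedDeriv_succ] using hV t ht
  rw [expMean_eq_dslope_cgf hX, expMean_eq_dslope_cgf hX]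
  simpa [Real.dist_eq] using
    (lipschitzOnWith_dslope (convex_Icc _ _) h0 (fun t _ => hcgf.differentiable two_ne_zero t)
      hlip).dist_le_mul m (abs_le.1 hm) m' (abs_le.1 hm')

/-- An upper bound for the second moment of `W` under every exponential tilt of `μ` by `exp Z`
with `|Z| ≤ ε W`. -/
def tiltBound (W : Ω → ℝ) (μ : Measure Ω) (ε : ℝ) : ℝ :=
  μ[fun ω => W ω ^ 2 * Real.exp (ε * W ω)] / mgf W μ (-ε)

lemma tendsto_tiltBound (hW : HasExpMoments W μ) :
    Tendsto (tiltBound W μ) (𝓝 0) (𝓝 (μ[fun ω => W ω ^ 2])) := by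
  have hnum : Tendsto (fun ε => μ[fun ω => W ω ^ 2 * Real.exp (ε * W ω)]) (𝓝 0)
      (𝓝 (μ[fun ω => W ω ^ 2])) := by
    have h := (differentiableAt_iteratedDeriv_mgf (hW.mem_interior 0) 2).continuousAt.tendsto
    rw [funext fun ε => iteratedDeriv_mgf (hW.mem_interior ε) 2] at h
    simpa using h
  have hden : Tendsto (fun ε => mgf W μ (-ε)) (𝓝 0) (𝓝 1) := by
    have h := ((continuous_mgf hW).comp continuous_neg).tendsto 0
    simpa [Function.comp_def] using h
  have h := hnum.div hden one_ne_zero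
  rw [div_one] at h
  exact h

lemma abs_iteratedDeriv_two_cgf_le (hX : HasExpMoments X μ) (hW : HasExpMoments W μ) {K T t : ℝ}
    (hXW : ∀ ω, |X ω| ≤ K * W ω) (ht : |t| ≤ T) :
    |iteratedDeriv 2 (cgf X μ) t| ≤ K ^ 2 * tiltBound W μ (T * K) := by
  have htX : ∀ ω, |t * X ω| ≤ T * K * W ω := fun ω => by
    rw [abs_mul, mul_assoc]
    exact mul_le_mul ht (hXW ω) (abs_nonneg _) ((abs_nonneg t).trans ht)
  have hmgf : mgf W μ (-(T * K)) ≤ mgf X μ t :=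
    integral_mono (hW _) (hX t) fun ω => Real.exp_le_exp.2 <| by
      linarith [neg_le_of_abs_le (htX ω)]
  have hmoment : μ[fun ω => X ω ^ 2 * Real.exp (t * X ω)]
      ≤ K ^ 2 * μ[fun ω => W ω ^ 2 * Real.exp (T * K * W ω)] := by
    rw [← integral_const_mul]
    refine integral_mono
      (integrable_pow_mul_exp_of_mem_interior_integrableExpSet (hX.mem_interior t) 2)
      ((integrable_pow_mul_exp_of_mem_interior_integrableExpSet
        (hW.mem_interior (T * K)) 2).const_mul _) fun ω => ?_
    calc X ω ^ 2 * Real.exp (t * X ω) ≤ (K * W ω) ^ 2 * Real.exp (T * K * W ω) :=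
          mul_le_mul (sq_le_sq.2 ((hXW ω).trans (le_abs_self _)))
            (Real.exp_le_exp.2 (le_of_abs_le (htX ω))) (Real.exp_pos _).le (sq_nonneg _)
      _ = K ^ 2 * (W ω ^ 2 * Real.exp (T * K * W ω)) := by rw [mul_pow, mul_assoc]
  rw [abs_of_nonneg]
  · calc iteratedDeriv 2 (cgf X μ) t
        ≤ μ[fun ω => X ω ^ 2 * Real.exp (t * X ω)] / mgf X μ t := by
          rw [iteratedDeriv_two_cgf (hX.mem_interior t)]
          exact sub_le_self _ (sq_nonneg _)
      _ ≤ K ^ 2 * μ[fun ω => W ω ^ 2 * Real.exp (T * K * W ω)] / mgf W μ (-(T * K)) :=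
          div_le_div₀ (by positivity) hmoment (mgf_pos (hW _)) hmgf
      _ = K ^ 2 * tiltBound W μ (T * K) := mul_div_assoc _ _ _
  · rw [iteratedDeriv_two_cgf_eq_integral (hX.mem_interior t)]
    exact div_nonneg (integral_nonneg fun ω => by positivity) mgf_nonneg

end ExpMoments

/-! ## Lipschitz functions of a Gaussian variable -/

lemma hasExpMoments_abs_stdGauss : HasExpMoments (fun z => |z|) stdGauss :=
  HasExpMoments.abs (X := fun z => z) fun t => integrable_exp_mul_gaussianReal t

lemma integral_sq_stdGauss : ∫ z, z ^ 2 ∂stdGauss = 1 := by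
  have h := variance_id_gaussianReal (μ := 0) (v := 1)
  rw [variance_eq_integral (by fun_prop)] at h
  simpa [stdGauss] using h

lemma stdGauss_map_mul_sqrt {s : ℝ} (hs : 0 ≤ s) :
    stdGauss.map (· * √s) = gaussianReal 0 s.toNNReal := by
  rw [stdGauss, gaussianReal_map_mul_const, mul_zero, mul_one]
  congr 1
  ext
  simp [hs]

lemma integral_integral_stdGauss {E : Type*} [NormedAddCommGroup E] [NormedSpace ℝ E] {G : ℝ → E}
    (hG : Continuous G) {s t : ℝ} (hs : 0 ≤ s) (ht : 0 ≤ t)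
    (hint : Integrable (fun z => G (z * √(s + t))) stdGauss) :
    ∫ z, ∫ w, G (z * √s + w * √t) ∂stdGauss ∂stdGauss = ∫ z, G (z * √(s + t)) ∂stdGauss := by
  have hconv : stdGauss.map (· * √(s + t)) = stdGauss.map (· * √s) ∗ stdGauss.map (· * √t) := by
    rw [stdGauss_map_mul_sqrt hs, stdGauss_map_mul_sqrt ht,
      stdGauss_map_mul_sqrt (add_nonneg hs ht), gaussianReal_conv_gaussianReal, add_zero,
      Real.toNNReal_add hs ht]
  have hmap : ∀ (r : ℝ) {F : ℝ → E}, StronglyMeasurable F →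
      ∫ x, F x ∂stdGauss.map (· * √r) = ∫ z, F (z * √r) ∂stdGauss := fun r F hF =>
    integral_map (by fun_prop) hF.aestronglyMeasurable
  have hint' : Integrable G (stdGauss.map (· * √s) ∗ stdGauss.map (· * √t)) := by
    rw [← hconv]
    exact (integrable_map_measure hG.aestronglyMeasurable (by fun_prop)).2 hint
  have hG₂ : Continuous fun p : ℝ × ℝ => G (p.1 + p.2) := hG.comp continuous_add
  rw [← hmap (s + t) hG.stronglyMeasurable, hconv, integral_conv hint',
    hmap s (hG₂.stronglyMeasurable.integral_prod_right (f := fun x y => G (x + y)))]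
  refine integral_congr_ae (ae_of_all _ fun z => ?_)
  exact (hmap t (hG.comp (continuous_const_add (z * √s))).stronglyMeasurable).symm

/-! ## One step of the Parisi recursion -/

section PStep

variable {L L' : ℝ≥0} {g g' : ℝ → ℝ}

lemma pStep_eq_expMean (m s : ℝ) (g : ℝ → ℝ) (y : ℝ) :
    pStep m s g y = expMean m (fun z => g (y + z * √s)) stdGauss :=
  rfl

lemma pStep_zero (m : ℝ) (g : ℝ → ℝ) : pStep m 0 g = g := by
  funext y
  unfold pStep
  split_ifs with hm
  · simp
  · simp [hm]

lemma abs_shift_sub_le (hg : LipschitzWith L g) (y s z : ℝ) :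
    |g (y + z * √s) - g y| ≤ L * √s * |z| := by
  calc |g (y + z * √s) - g y| ≤ L * |y + z * √s - y| := hg.dist_le_mul _ _
    _ = L * √s * |z| := by
      rw [add_sub_cancel_left, abs_mul, abs_of_nonneg (Real.sqrt_nonneg s)]
      ring

lemma hasExpMoments_shift_sub (hg : LipschitzWith L g) (y s : ℝ) :
    HasExpMoments (fun z => g (y + z * √s) - g y) stdGauss := by
  have hcont := hg.continuous
  exact hasExpMoments_abs_stdGauss.of_abs_le_mul (by fun_prop)
    (ae_of_all _ (abs_shift_sub_le hg y s))

lemma hasExpMoments_shift (hg : LipschitzWith L g) (y s : ℝ) :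
    HasExpMoments (fun z => g (y + z * √s)) stdGauss := by
  simpa using (hasExpMoments_shift_sub hg y s).add_const (g y)

lemma pStep_le_pStep_add (hg : LipschitzWith L g) (hg' : LipschitzWith L' g') {y y' D : ℝ}
    (h : ∀ u, g (y + u) ≤ g' (y' + u) + D) (m s : ℝ) : pStep m s g y ≤ pStep m s g' y' + D :=
  expMean_le_add (hasExpMoments_shift hg y s) (hasExpMoments_shift hg' y' s)
    (ae_of_all _ fun z => h (z * √s)) m

lemma lipschitzWith_pStep (hg : LipschitzWith L g) (m s : ℝ) : LipschitzWith L (pStep m s g) :=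
  LipschitzWith.of_le_add_mul L fun a b =>
    pStep_le_pStep_add hg hg (fun u => by simpa using hg.le_add_mul (a + u) (b + u)) m s

lemma abs_pStep_sub_pStep_le (hg : LipschitzWith L g) (hg' : LipschitzWith L' g') {D : ℝ}
    (h : ∀ y, |g y - g' y| ≤ D) (m s y : ℝ) : |pStep m s g y - pStep m s g' y| ≤ D := by
  refine abs_sub_le_iff.2 ⟨?_, ?_⟩ <;> rw [sub_le_iff_le_add']
  · exact pStep_le_pStep_add hg hg' (fun u => by linarith [le_of_abs_le (h (y + u))]) m s
  · exact pStep_le_pStep_add hg' hg (fun u => by linarith [neg_le_of_abs_le (h (y + u))]) m s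

lemma pStep_add (hg : LipschitzWith L g) (m : ℝ) {s t : ℝ} (hs : 0 ≤ s) (ht : 0 ≤ t) :
    pStep m (s + t) g = pStep m s (pStep m t g) := by
  funext y
  have hcont := hg.continuous
  rcases eq_or_ne m 0 with rfl | hm
  · have h := integral_integral_stdGauss (G := fun x => g (y + x)) (by fun_prop) hs ht
      (hasExpMoments_shift hg y (s + t)).integrable
    simp only [← add_assoc] at h
    simpa only [pStep, if_true] using h.symm
  · have h := integral_integral_stdGauss (G := fun x => Real.exp (m * g (y + x))) (by fun_prop) hs
      ht (hasExpMoments_shift hg y (s + t) m)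
    have hexp : ∀ u, Real.exp (m * pStep m t g u)
        = ∫ w, Real.exp (m * g (u + w * √t)) ∂stdGauss := fun u => by
      rw [pStep, if_neg hm, mul_inv_cancel_left₀ hm,
        Real.exp_log (integral_exp_pos (hasExpMoments_shift hg u t m))]
    simp only [← add_assoc, ← hexp] at h
    rw [pStep, pStep, if_neg hm, if_neg hm, h]

lemma abs_pStep_sub_pStep_le_tiltBound (hg : LipschitzWith L g) {m m' T : ℝ} (hm : |m| ≤ T)
    (hm' : |m'| ≤ T) {s : ℝ} (hs : 0 ≤ s) (y : ℝ) :
    |pStep m s g y - pStep m' s g y|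
      ≤ s * (L ^ 2 / 2 * tiltBound (fun z => |z|) stdGauss (T * (L * √s)) * |m - m'|) := by
  have hexp := hasExpMoments_shift_sub hg y s
  have hcenter : ∀ c, pStep c s g y
      = expMean c (fun z => g (y + z * √s) - g y) stdGauss + g y := fun c => by
    rw [← expMean_add_const hexp]
    simp only [sub_add_cancel, pStep_eq_expMean]
  rw [hcenter m, hcenter m', add_sub_add_right_eq_sub]
  refine (abs_expMean_sub_expMean_le hexp (fun t ht => abs_iteratedDeriv_two_cgf_le hexp
    hasExpMoments_abs_stdGauss (abs_shift_sub_le hg y s) (abs_le.2 ht)) hm hm').trans_eq ?_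
  rw [mul_pow, Real.sq_sqrt hs]
  ring

lemma abs_pStep_nsmul_sub_le (hg : LipschitzWith L g) {m m' h C : ℝ} (hh : 0 ≤ h)
    (hC : ∀ φ : ℝ → ℝ, LipschitzWith L φ → ∀ y, |pStep m h φ y - pStep m' h φ y| ≤ h * C) (n : ℕ) :
    ∀ y, |pStep m (n * h) g y - pStep m' (n * h) g y| ≤ n * h * C := by
  induction n with
  | zero => simp [pStep_zero]
  | succ n ih =>
    intro y
    have hnh : 0 ≤ n * h := by positivity
    rw [Nat.cast_succ, show ((n : ℝ) + 1) * h = h + n * h by ring, pStep_add hg m hh hnh,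
      pStep_add hg m' hh hnh]
    calc |pStep m h (pStep m (n * h) g) y - pStep m' h (pStep m' (n * h) g) y|
        ≤ |pStep m h (pStep m (n * h) g) y - pStep m' h (pStep m (n * h) g) y|
          + |pStep m' h (pStep m (n * h) g) y - pStep m' h (pStep m' (n * h) g) y| :=
          abs_sub_le _ _ _
      _ ≤ h * C + n * h * C := add_le_add (hC _ (lipschitzWith_pStep hg m _) y)
          (abs_pStep_sub_pStep_le (lipschitzWith_pStep hg m _) (lipschitzWith_pStep hg m' _) ih
            m' h y)
      _ = (h + n * h) * C := by ring

lemma abs_pStep_sub_pStep_le_mul_abs_sub (hg : LipschitzWith L g) (m m' : ℝ) {s : ℝ} (hs : 0 ≤ s)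
    (y : ℝ) : |pStep m s g y - pStep m' s g y| ≤ L ^ 2 / 2 * (s * |m - m'|) := by
  have hle : ∀ n : ℕ, |pStep m s g y - pStep m' s g y|
      ≤ s * (L ^ 2 / 2 * tiltBound (fun z => |z|) stdGauss
          (max |m| |m'| * (L * √(s * (1 / ((n : ℝ) + 1))))) * |m - m'|) := fun n => by
    have hn : ((n + 1 : ℕ) : ℝ) * (s * (1 / ((n : ℝ) + 1))) = s := by
      push_cast
      field_simp
    have hh : 0 ≤ s * (1 / ((n : ℝ) + 1)) := by positivity
    have h := abs_pStep_nsmul_sub_le hg hh (fun φ hφ => abs_pStep_sub_pStep_le_tiltBound hφ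
      (le_max_left |m| |m'|) (le_max_right |m| |m'|) hh) (n + 1) y
    rwa [hn] at h
  have harg : Tendsto (fun n : ℕ => max |m| |m'| * (L * √(s * (1 / ((n : ℝ) + 1))))) atTop
      (𝓝 0) := by
    simpa using (((tendsto_one_div_add_atTop_nhds_zero_nat (𝕜 := ℝ)).const_mul s).sqrt.const_mul
      (L : ℝ)).const_mul (max |m| |m'|)
  have hlim := ((((tendsto_tiltBound hasExpMoments_abs_stdGauss).comp harg).const_mul
    (L ^ 2 / 2 : ℝ)).mul_const |m - m'|).const_mul s
  simp only [sq_abs, integral_sq_stdGauss] at hlim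
  calc |pStep m s g y - pStep m' s g y| ≤ s * (L ^ 2 / 2 * 1 * |m - m'|) :=
        ge_of_tendsto' hlim hle
    _ = L ^ 2 / 2 * (s * |m - m'|) := by ring

end PStep

/-! ## The Parisi function along a partition -/

lemma lipschitzWith_log_cosh : LipschitzWith 1 fun y => Real.log (Real.cosh y) := by
  refine lipschitzWith_of_nnnorm_deriv_le
    (fun y => (Real.differentiable_cosh y).log (Real.cosh_pos y).ne') fun y => ?_
  rw [deriv.log Real.differentiable_cosh.differentiableAt (Real.cosh_pos y).ne', Real.deriv_cosh,
    ← NNReal.coe_le_coe, coe_nnnorm, NNReal.coe_one, Real.norm_eq_abs, ← Real.tanh_eq_sinh_div_cosh]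
  exact (Real.abs_tanh_lt_one y).le

lemma lipschitzWith_parisiLevel (K : ℕ) (q m : ℕ → ℝ) (β : ℝ) (j : ℕ) :
    LipschitzWith ‖β‖₊ (parisiLevel K q m β j) := by
  induction j with
  | zero => exact (lipschitzWith_log_cosh.comp (lipschitzWith_smul β)).weaken (one_mul _).le
  | succ j ih => exact lipschitzWith_pStep ih _ _

lemma lipschitzWith_parisiF (K : ℕ) (q m : ℕ → ℝ) (β r : ℝ) :
    LipschitzWith ‖β‖₊ (parisiF K q m β r) :=
  lipschitzWith_pStep (lipschitzWith_parisiLevel K q m β _) _ _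

lemma parisiLevel_sub_of_lt {K a : ℕ} (ha : a < K) (q m : ℕ → ℝ) (β : ℝ) :
    parisiLevel K q m β (K - a)
      = pStep (m (a + 1)) (q (a + 1) - q a) (parisiLevel K q m β (K - (a + 1))) := by
  rw [show K - a = K - (a + 1) + 1 by omega, parisiLevel,
    show K - (K - (a + 1)) = a + 1 by omega, Nat.add_sub_cancel]

/-- The nodes `0 = q 0 ≤ q 1 ≤ ⋯ ≤ q K = 1` of a piecewise constant order parameter; the terms of
the sequence `q` beyond the index `K` are unconstrained. -/
structure IsPartition (K : ℕ) (q : ℕ → ℝ) : Prop where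
  zero : q 0 = 0
  last : q K = 1
  mono : MonotoneOn q (Set.Iic K)

lemma OrderParam.isPartition (X : OrderParam) : IsPartition X.K X.q where
  zero := X.hq0
  last := X.hqK
  mono := monotoneOn_of_le_add_one Set.ordConnected_Iic fun a _ _ ha => X.hq_mono a ha

lemma backward_induction_finset {α : Type*} [LinearOrder α] (S : Finset α) {P : α → Prop} {b : α}
    (hb : P b)
    (hstep : ∀ r r', r < r' → r' ≤ b → (∀ t ∈ S, t ∉ Set.Ioo r r') → P r' → P r) :
    ∀ r ≤ b, P r := by
  induction S using Finset.induction_on generalizing P b with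
  | empty =>
    intro r hr
    rcases hr.eq_or_lt with rfl | hr
    · exact hb
    · exact hstep r b hr le_rfl (by simp) hb
  | insert t S _ ih =>
    have hge : ∀ r ≤ b, t ≤ r → P r :=
      ih (fun _ => hb) fun r r' hrr' hr' hS h htr => hstep r r' hrr' hr'
        (Finset.forall_mem_insert _ _ _ |>.2 ⟨fun ht => ht.1.not_ge htr, hS⟩)
        (h (htr.trans hrr'.le))
    have hmin : P (min b t) := by
      rcases le_total b t with hbt | htb
      · rwa [min_eq_left hbt]
      · rw [min_eq_right htb]
        exact hge t htb le_rfl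
    have hle : ∀ r ≤ min b t, P r :=
      ih hmin fun r r' hrr' hr' hS => hstep r r' hrr' (hr'.trans (min_le_left _ _))
        (Finset.forall_mem_insert _ _ _ |>.2
          ⟨fun ht => ht.2.not_ge (hr'.trans (min_le_right _ _)), hS⟩)
    intro r hr
    rcases le_total t r with htr | hrt
    · exact hge r hr htr
    · exact hle r (le_min hr hrt)

namespace IsPartition

variable {K K' : ℕ} {q q' : ℕ → ℝ}

lemma node_le_node (hq : IsPartition K q) {a b : ℕ} (hba : b ≤ a) (ha : a ≤ K) : q b ≤ q a :=
  hq.mono (hba.trans ha) ha hba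

lemma parisiLevel_sub_eq (hq : IsPartition K q) (m : ℕ → ℝ) (β : ℝ) {a b : ℕ} (hba : b ≤ a)
    (ha : a ≤ K) (hqba : q b = q a) :
    parisiLevel K q m β (K - b) = parisiLevel K q m β (K - a) := by
  induction a, hba using Nat.le_induction with
  | base => rfl
  | succ a hba ih =>
    have haK : a ≤ K := (Nat.le_succ a).trans ha
    have hqa : q b = q a :=
      (hq.node_le_node hba haK).antisymm (hqba ▸ hq.node_le_node a.le_succ ha)
    rw [ih haK hqa, parisiLevel_sub_of_lt ha, ← hqba, hqa, sub_self, pStep_zero]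

/-- At a node shared by several indices the definition of `parisiF` selects the smallest one, hence
possibly a value of `m` other than `m (a + 1)`; the step then has length `0`. -/
lemma parisiF_eq_pStep_parisiLevel (hq : IsPartition K q) (m : ℕ → ℝ) (β : ℝ) {a : ℕ} {r : ℝ}
    (ha : a < K) (hr : r ∈ Set.Icc (q a) (q (a + 1))) :
    parisiF K q m β r = pStep (m (a + 1)) (q (a + 1) - r) (parisiLevel K q m β (K - (a + 1))) := by
  obtain ⟨b, hb⟩ : ∃ b, sInf {a | r ≤ q a} = b := ⟨_, rfl⟩
  have hrb : r ≤ q b := hb ▸ Nat.sInf_mem (s := {a | r ≤ q a}) ⟨a + 1, hr.2⟩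
  have hba : b ≤ a + 1 := hb ▸ Nat.sInf_le hr.2
  have hF : parisiF K q m β r = pStep (m b) (q b - r) (parisiLevel K q m β (K - b)) := by
    funext y
    rw [parisiF, hb]
  rcases hba.eq_or_lt with rfl | hba
  · exact hF
  have hqba : q b ≤ q a := hq.node_le_node (Nat.le_of_lt_succ hba) ha.le
  have hra : r = q a := (hrb.trans hqba).antisymm hr.1
  have hqb : q b = q a := hqba.antisymm (hra ▸ hrb)
  rw [hF, hra, hqb, sub_self, pStep_zero,
    hq.parisiLevel_sub_eq m β (Nat.le_of_lt_succ hba) ha.le hqb, parisiLevel_sub_of_lt ha]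

lemma parisiF_one (hq : IsPartition K q) (m : ℕ → ℝ) (β : ℝ) :
    parisiF K q m β 1 = fun y => Real.log (Real.cosh (β * y)) := by
  obtain _ | a := K
  · exact absurd (hq.zero.symm.trans hq.last) zero_ne_one
  · rw [hq.parisiF_eq_pStep_parisiLevel m β a.lt_succ_self
      ⟨hq.last ▸ hq.node_le_node a.le_succ le_rfl, hq.last.ge⟩, hq.last, sub_self, pStep_zero,
      Nat.sub_self, parisiLevel]

lemma xFun_of_mem_Ico (hq : IsPartition K q) (m : ℕ → ℝ) {a : ℕ} {s : ℝ} (ha : a < K)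
    (hs : s ∈ Set.Ico (q a) (q (a + 1))) : xFun K q m s = m (a + 1) := by
  have hs1 : s < 1 := hs.2.trans_le (hq.last ▸ hq.node_le_node ha le_rfl)
  have hinf : sInf {b | s < q b} = a + 1 := by
    refine (Nat.sInf_le hs.2).antisymm (le_csInf ⟨a + 1, hs.2⟩ fun b hb => ?_)
    by_contra! hba
    have hqba : q b ≤ q a := hq.node_le_node (Nat.le_of_lt_succ hba) ha.le
    exact absurd (hb.trans_le (hqba.trans hs.1)) (lt_irrefl s)
  rw [xFun, if_neg hs1.not_ge, hinf]

lemma exists_subinterval (hq : IsPartition K q) {r r' : ℝ} (hr : 0 ≤ r) (hrr' : r < r')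
    (hr' : r' ≤ 1) (hnode : ∀ a ≤ K, q a ∉ Set.Ioo r r') :
    ∃ a < K, q a ≤ r ∧ r' ≤ q (a + 1) := by
  classical
  have hex : ∃ b, r < q b := ⟨K, hq.last.symm ▸ hrr'.trans_le hr'⟩
  have hK : Nat.find hex ≤ K := Nat.find_min' hex (hq.last.symm ▸ hrr'.trans_le hr')
  have hpos : Nat.find hex ≠ 0 := fun h =>
    (hq.zero ▸ h ▸ Nat.find_spec hex : r < 0).not_ge hr
  obtain ⟨a, ha⟩ := Nat.exists_eq_succ_of_ne_zero hpos
  refine ⟨a, by omega, not_lt.1 (Nat.find_min hex (by omega)), ?_⟩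
  have hra : r < q (a + 1) := by simpa [ha] using Nat.find_spec hex
  exact not_lt.1 fun h => hnode (a + 1) (by omega) ⟨hra, h⟩

lemma exists_xFun_eq_and_parisiF_eq_pStep (hq : IsPartition K q) (m : ℕ → ℝ) {r r' : ℝ}
    (hr : 0 ≤ r) (hrr' : r < r') (hr' : r' ≤ 1) (hnode : ∀ a ≤ K, q a ∉ Set.Ioo r r') :
    ∃ c, (∀ s ∈ Set.Ico r r', xFun K q m s = c) ∧
      ∀ β, parisiF K q m β r = pStep c (r' - r) (parisiF K q m β r') := by
  obtain ⟨a, ha, har, hra⟩ := hq.exists_subinterval hr hrr' hr' hnode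
  refine ⟨m (a + 1), fun s hs => hq.xFun_of_mem_Ico m ha ⟨har.trans hs.1, hs.2.trans_le hra⟩,
    fun β => ?_⟩
  rw [hq.parisiF_eq_pStep_parisiLevel m β ha ⟨har, hrr'.le.trans hra⟩,
    hq.parisiF_eq_pStep_parisiLevel m β ha ⟨har.trans hrr'.le, hra⟩,
    ← pStep_add (lipschitzWith_parisiLevel K q m β _) _ (sub_nonneg.2 hrr'.le)
      (sub_nonneg.2 hra)]
  congr 1
  ring

lemma intervalIntegrable_xFun (hq : IsPartition K q) (m : ℕ → ℝ) {r r' : ℝ}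
    (hr : r ∈ Set.Icc (0 : ℝ) 1) (hr' : r' ∈ Set.Icc (0 : ℝ) 1) :
    IntervalIntegrable (xFun K q m) volume r r' := by
  suffices h : ∀ r ≤ 1, 0 ≤ r → IntervalIntegrable (xFun K q m) volume r 1 from
    (h r hr.2 hr.1).trans (h r' hr'.2 hr'.1).symm
  refine backward_induction_finset ((Finset.range (K + 1)).image q)
    (fun _ => IntervalIntegrable.refl) fun r r' hrr' hr' hS h hr => ?_
  have hnode : ∀ a ≤ K, q a ∉ Set.Ioo r r' := fun a ha =>
    hS _ (Finset.mem_image_of_mem q (Finset.mem_range_succ_iff.2 ha))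
  obtain ⟨c, hc, -⟩ := hq.exists_xFun_eq_and_parisiF_eq_pStep m hr hrr' hr' hnode
  refine IntervalIntegrable.trans (b := r') ?_ (h (hr.trans hrr'.le))
  refine (intervalIntegrable_const (c := c)).congr_uIoo fun s hs => ?_
  rw [Set.uIoo_of_le hrr'.le] at hs
  exact (hc s (Set.Ioo_subset_Ico_self hs)).symm

lemma abs_parisiF_sub_parisiF_le_add (hq : IsPartition K q) (hq' : IsPartition K' q')
    (m m' : ℕ → ℝ) (β : ℝ) {r r' D : ℝ} (hr : 0 ≤ r) (hrr' : r < r') (hr' : r' ≤ 1)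
    (hnode : ∀ a ≤ K, q a ∉ Set.Ioo r r') (hnode' : ∀ a ≤ K', q' a ∉ Set.Ioo r r')
    (hD : ∀ y, |parisiF K q m β r' y - parisiF K' q' m' β r' y| ≤ D) (y : ℝ) :
    |parisiF K q m β r y - parisiF K' q' m' β r y|
      ≤ β ^ 2 / 2 * (∫ s in r..r', |xFun K q m s - xFun K' q' m' s|) + D := by
  obtain ⟨c, hc, hF⟩ := hq.exists_xFun_eq_and_parisiF_eq_pStep m hr hrr' hr' hnode
  obtain ⟨c', hc', hF'⟩ := hq'.exists_xFun_eq_and_parisiF_eq_pStep m' hr hrr' hr' hnode'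
  have hint : ∫ s in r..r', |xFun K q m s - xFun K' q' m' s| = (r' - r) * |c - c'| := by
    rw [← smul_eq_mul, ← intervalIntegral.integral_const]
    refine intervalIntegral.integral_congr_Ioo_of_le hrr'.le fun s hs => ?_
    rw [hc s (Set.Ioo_subset_Ico_self hs), hc' s (Set.Ioo_subset_Ico_self hs)]
  have hlip := lipschitzWith_parisiF K q m β r'
  rw [hF β, hF' β, hint]
  refine (abs_sub_le _ (pStep c' (r' - r) (parisiF K q m β r') y) _).trans (add_le_add ?_ ?_)
  · simpa using abs_pStep_sub_pStep_le_mul_abs_sub hlip c c' (sub_nonneg.2 hrr'.le) y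
  · exact abs_pStep_sub_pStep_le hlip (lipschitzWith_parisiF K' q' m' β r') hD _ _ y

end IsPartition

theorem parisiF_L1_continuity_general {K K' : ℕ} {q q' : ℕ → ℝ} (hq : IsPartition K q)
    (hq' : IsPartition K' q') (m m' : ℕ → ℝ) (β : ℝ) :
    ∀ r ∈ Set.Icc (0 : ℝ) 1, ∀ y : ℝ,
      |parisiF K q m β r y - parisiF K' q' m' β r y|
        ≤ β ^ 2 / 2 * ∫ s in r..1, |xFun K q m s - xFun K' q' m' s| := by
  have hint : ∀ {r r' : ℝ}, r ∈ Set.Icc (0 : ℝ) 1 → r' ∈ Set.Icc (0 : ℝ) 1 →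
      IntervalIntegrable (fun s => |xFun K q m s - xFun K' q' m' s|) volume r r' := fun hr hr' =>
    ((hq.intervalIntegrable_xFun m hr hr').sub (hq'.intervalIntegrable_xFun m' hr hr')).abs
  suffices h : ∀ r ≤ 1, 0 ≤ r → ∀ y, |parisiF K q m β r y - parisiF K' q' m' β r y|
      ≤ β ^ 2 / 2 * ∫ s in r..1, |xFun K q m s - xFun K' q' m' s| from
    fun r hr => h r hr.2 hr.1
  refine backward_induction_finset
    ((Finset.range (K + 1)).image q ∪ (Finset.range (K' + 1)).image q')
    (fun _ y => by simp [hq.parisiF_one, hq'.parisiF_one])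
    fun r r' hrr' hr' hS hD hr y => ?_
  have hr'0 : 0 ≤ r' := hr.trans hrr'.le
  have hS' := Finset.forall_mem_union.1 hS
  rw [← intervalIntegral.integral_add_adjacent_intervals
    (hint ⟨hr, hrr'.le.trans hr'⟩ ⟨hr'0, hr'⟩) (hint ⟨hr'0, hr'⟩ ⟨zero_le_one, le_rfl⟩), mul_add]
  exact hq.abs_parisiF_sub_parisiF_le_add hq' m m' β hr hrr' hr'
    (fun a ha => hS'.1 _ (Finset.mem_image_of_mem q (Finset.mem_range_succ_iff.2 ha)))
    (fun a ha => hS'.2 _ (Finset.mem_image_of_mem q' (Finset.mem_range_succ_iff.2 ha)))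
    (hD hr'0) y

/-- L¹ continuity of the Parisi function in the functional order parameter:
`|f(r, y; x, β) − f(r, y; x̄, β)| ≤ (β²/2) ∫_r^1 |x(r') − x̄(r')| dr'`
for every `r ∈ [0,1]`, `y ∈ ℝ` and `β ≥ 0`. -/
theorem parisiF_L1_continuity (X Y : OrderParam) (β : ℝ) (hβ : 0 ≤ β) :
    ∀ r ∈ Set.Icc (0 : ℝ) 1, ∀ y : ℝ,
      |parisiF X.K X.q X.m β r y - parisiF Y.K Y.q Y.m β r y|
        ≤ β ^ 2 / 2 * ∫ s in r..1, |xFun X.K X.q X.m s - xFun Y.K Y.q Y.m s| :=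
  parisiF_L1_continuity_general X.isPartition Y.isPartition X.m Y.m β

end
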